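/- Let F, F', G, G' be convex bodies in ℝⁿ with int F ≠ ∅. If g_F + g_G = g_{F'} + g_{G'} and g_{F,G} = g_{F',G'}, then either (g_F = g_{F'} and g_G = g_{G'}) or (g_F = g_{G'} and g_G = g_{F'}). -/

import Mathlib

open MeasureTheory Pointwise

/-- The covariogram of a set `K ⊆ ℝⁿ`: `g_K(x) = λ_n(K ∩ (K + x))`. -/
noncomputable def covariogram {n : ℕ} (K : Set (EuclideanSpace ℝ (Fin n)))
    (x : EuclideanSpace ℝ (Fin n)) : ℝ :=
  (volume (K ∩ ((x + ·) '' K))).toReal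

/-- The cross covariogram of sets `K, L ⊆ ℝⁿ`: `g_{K,L}(x) = λ_n(K ∩ (L + x))`. -/
noncomputable def crossCovariogram {n : ℕ} (K L : Set (EuclideanSpace ℝ (Fin n)))
    (x : EuclideanSpace ℝ (Fin n)) : ℝ :=
  (volume (K ∩ ((x + ·) '' L))).toReal

/-! The characteristic function of `g_{K,L}(x) dx` is `φ_K · conj φ_L`, where `φ_K` is the
characteristic function of `1_K(x) dx`. Writing `p, q, p', q'` for `|φ_F|², |φ_G|², |φ_{F'}|²,
|φ_{G'}|²`, the two hypotheses say that `p + q = p' + q'` and, on taking squared moduli in the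
second one, `p q = p' q'`. Hence `(p - p') (p - q') = 0`. The sets are bounded, so these functions
are real-analytic on all of `ℝⁿ`, and one of the two factors vanishes identically: `{p, q}` and
`{p', q'}` agree. Finally, `|φ_K|²` determines `g_K`, because finite measures are determined by
their characteristic functions and covariograms are continuous. -/

open Topology ComplexConjugate symmDiff

section Analytic

variable {𝕜 E A : Type*} [NontriviallyNormedField 𝕜] [NormedAddCommGroup E] [NormedSpace 𝕜 E]

theorem eq_zero_or_eq_zero_of_mul_eq_zero_of_analyticOnNhd [PreconnectedSpace E] [NormedRing A]
    [NormedAlgebra 𝕜 A] [NoZeroDivisors A] {f g : E → A} (hf : AnalyticOnNhd 𝕜 f Set.univ)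
    (hg : AnalyticOnNhd 𝕜 g Set.univ) (hfg : f * g = 0) : f = 0 ∨ g = 0 := by
  refine or_iff_not_imp_left.2 fun hf0 ↦ ?_
  obtain ⟨x₀, hx₀⟩ := Function.ne_iff.1 hf0
  have hg0 : g =ᶠ[𝓝 x₀] 0 :=
    ((hf x₀ trivial).continuousAt.eventually_ne hx₀).mono fun x hx ↦
      (mul_eq_zero.1 (congrFun hfg x)).resolve_left hx
  exact hg.eq_of_eventuallyEq analyticOnNhd_const hg0

theorem eq_and_eq_or_eq_and_eq_of_add_eq_add_of_mul_eq_mul [PreconnectedSpace E]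
    [NormedCommRing A] [NormedAlgebra 𝕜 A] [NoZeroDivisors A] {p q p' q' : E → A}
    (hp : AnalyticOnNhd 𝕜 p Set.univ) (hp' : AnalyticOnNhd 𝕜 p' Set.univ)
    (hq' : AnalyticOnNhd 𝕜 q' Set.univ) (hadd : p + q = p' + q') (hmul : p * q = p' * q') :
    (p = p' ∧ q = q') ∨ (p = q' ∧ q = p') := by
  have hroots : (p - p') * (p - q') = 0 := by linear_combination p * hadd - hmul
  rcases eq_zero_or_eq_zero_of_mul_eq_zero_of_analyticOnNhd (hp.sub hp') (hp.sub hq') hroots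
    with h | h
  · obtain rfl : p = p' := sub_eq_zero.1 h
    exact .inl ⟨rfl, add_left_cancel hadd⟩
  · obtain rfl : p = q' := sub_eq_zero.1 h
    exact .inr ⟨rfl, add_left_cancel (hadd.trans (add_comm _ _))⟩

theorem analyticOnNhd_normSq_comp {E : Type*} [NormedAddCommGroup E] [NormedSpace ℝ E]
    {f : E → ℂ} {s : Set E} (hf : AnalyticOnNhd ℝ f s) :
    AnalyticOnNhd ℝ (fun x ↦ Complex.normSq (f x)) s := by
  have hre := Complex.reCLM.comp_analyticOnNhd hf
  have him := Complex.imCLM.comp_analyticOnNhd hf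
  exact (hre.mul hre).add (him.mul him)

theorem analyticOnNhd_integral_continuousMap {X F : Type*} [TopologicalSpace X] [CompactSpace X]
    [MeasurableSpace X] [BorelSpace X] [NormedAddCommGroup F] [NormedSpace ℝ F] [CompleteSpace F]
    [SecondCountableTopologyEither X F] (ν : Measure X) [IsFiniteMeasure ν] :
    AnalyticOnNhd ℝ (fun f : C(X, F) ↦ ∫ x, f x ∂ν) Set.univ := by
  have hintegral (f : C(X, F)) :
      (L1.integralCLM.comp (ContinuousMap.toLp (E := F) 1 ν ℝ)) f = ∫ x, f x ∂ν :=
    (L1.integral_eq _).symm.trans <| (L1.integral_eq_integral _).trans <|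
      integral_congr_ae (ContinuousMap.coeFn_toLp (𝕜 := ℝ) ν f)
  simp only [← hintegral]
  exact ContinuousLinearMap.analyticOnNhd _ _

end Analytic

section CharFun

variable {E : Type*} [NormedAddCommGroup E] [InnerProductSpace ℝ E] [MeasurableSpace E]

/-- The power spectrum `|φ_μ|²` of a measure `μ` with characteristic function `φ_μ`. -/
noncomputable def powerSpectrum (μ : Measure E) (t : E) : ℝ :=
  Complex.normSq (charFun μ t)

variable [BorelSpace E]

theorem charFun_measure_neg (μ : Measure E) (t : E) : charFun μ.neg t = conj (charFun μ t) := by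
  rw [← charFun_neg, ← neg_one_smul ℝ t, ← charFun_map_smul, Measure.neg_def]
  simp only [neg_one_smul]

theorem charFun_add_measure (μ ν : Measure E) [IsFiniteMeasure μ] [IsFiniteMeasure ν] (t : E) :
    charFun (μ + ν) t = charFun μ t + charFun ν t := by
  simp only [charFun_eq_integral_innerProbChar]
  exact integral_add_measure (BoundedContinuousFunction.integrable _ _)
    (BoundedContinuousFunction.integrable _ _)

-- On a compact `K`, the map `t ↦ (x ↦ exp (i ⟪x, t⟫))` is the exponential of the Banach algebra
-- `C(K, ℂ)` after a continuous linear map, and integration is a continuous linear functional.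
theorem analyticOnNhd_charFun_of_isCompact {μ : Measure E} [IsFiniteMeasure μ] {K : Set E}
    (hK : IsCompact K) (hμ : ∀ᵐ x ∂μ, x ∈ K) : AnalyticOnNhd ℝ (charFun μ) Set.univ := by
  have : CompactSpace K := isCompact_iff_compactSpace.1 hK
  let phase : E →L[ℝ] C(K, ℂ) :=
    { toFun := ContinuousMap.curry
        ⟨fun p : E × K ↦ inner ℝ (p.2 : E) p.1 * Complex.I, by fun_prop⟩
      map_add' := fun s t ↦ by ext x; simp [inner_add_right, add_mul]
      map_smul' := fun r t ↦ by ext x; simp [inner_smul_right, mul_assoc]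
      cont := ContinuousMap.continuous _ }
  have hexp (t : E) (x : K) :
      NormedSpace.exp (phase t) x = Complex.exp (inner ℝ (x : E) t * Complex.I) := by
    rw [Complex.exp_eq_exp_ℂ]
    exact NormedSpace.map_exp (ContinuousMap.evalAlgHom ℂ ℂ x) (continuous_eval_const x) _
  have hchar : charFun μ = fun t ↦ ∫ x : K, NormedSpace.exp (phase t) x ∂(μ.comap (↑)) := by
    ext t
    simp only [charFun_apply, hexp]
    rw [integral_subtype_comap hK.measurableSet fun x ↦ Complex.exp (inner ℝ x t * Complex.I),
      Measure.restrict_eq_self_of_ae_mem hμ]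
  rw [hchar]
  exact fun t _ ↦ (analyticOnNhd_integral_continuousMap _ _ trivial).comp
    ((NormedSpace.exp_analytic (𝕂 := ℝ) _).comp (phase.analyticAt t))

theorem analyticOnNhd_powerSpectrum_restrict [ProperSpace E] (μ : Measure E)
    [IsLocallyFiniteMeasure μ] {K : Set E} (hK : Bornology.IsBounded K) :
    AnalyticOnNhd ℝ (powerSpectrum (μ.restrict K)) Set.univ := by
  have : IsFiniteMeasure (μ.restrict K) := isFiniteMeasure_restrict.2 hK.measure_lt_top.ne
  exact analyticOnNhd_normSq_comp <| analyticOnNhd_charFun_of_isCompact hK.isCompact_closure <|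
    ae_restrict_of_ae_restrict_of_subset subset_closure <|
      ae_restrict_mem isClosed_closure.measurableSet

end CharFun

/-- The cross-correlation of two measures, the image of `μ ⊗ ν` under `(x, y) ↦ x - y`. For the
restrictions of Lebesgue measure to `K` and `L`, it has the cross covariogram `g_{K,L}` as its
density. -/
noncomputable def crossCorrelation {G : Type*} [AddGroup G] [MeasurableSpace G]
    (μ ν : Measure G) : Measure G :=
  μ ∗ ν.neg

section CrossCorrelation

instance crossCorrelation.instIsFiniteMeasure {G : Type*} [AddGroup G] [MeasurableSpace G]
    (μ ν : Measure G) [IsFiniteMeasure μ] [IsFiniteMeasure ν] :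
    IsFiniteMeasure (crossCorrelation μ ν) := by
  unfold crossCorrelation Measure.neg
  infer_instance

variable {E : Type*} [NormedAddCommGroup E] [InnerProductSpace ℝ E] [MeasurableSpace E]
  [BorelSpace E] [SecondCountableTopology E]

theorem charFun_crossCorrelation (μ ν : Measure E) [IsFiniteMeasure μ] [IsFiniteMeasure ν]
    (t : E) : charFun (crossCorrelation μ ν) t = charFun μ t * conj (charFun ν t) := by
  have : IsFiniteMeasure ν.neg := Measure.isFiniteMeasure_map _ _
  rw [crossCorrelation, charFun_conv, charFun_measure_neg]

theorem charFun_crossCorrelation_self (μ : Measure E) [IsFiniteMeasure μ] (t : E) :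
    charFun (crossCorrelation μ μ) t = powerSpectrum μ t := by
  rw [charFun_crossCorrelation, Complex.mul_conj, powerSpectrum]

theorem crossCorrelation_self_eq_iff [CompleteSpace E] {μ ν : Measure E} [IsFiniteMeasure μ]
    [IsFiniteMeasure ν] :
    crossCorrelation μ μ = crossCorrelation ν ν ↔ powerSpectrum μ = powerSpectrum ν := by
  have hcharFun : charFun (crossCorrelation μ μ) = charFun (crossCorrelation ν ν) ↔
      powerSpectrum μ = powerSpectrum ν := by
    simp only [funext_iff, charFun_crossCorrelation_self, Complex.ofReal_inj]
  exact ⟨fun h ↦ hcharFun.1 (congrArg charFun h), fun h ↦ Measure.ext_of_charFun (hcharFun.2 h)⟩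

theorem crossCorrelation_system_decouples [CompleteSpace E] {μ ν μ' ν' : Measure E}
    [IsFiniteMeasure μ] [IsFiniteMeasure ν] [IsFiniteMeasure μ'] [IsFiniteMeasure ν']
    (hμ : AnalyticOnNhd ℝ (powerSpectrum μ) Set.univ)
    (hμ' : AnalyticOnNhd ℝ (powerSpectrum μ') Set.univ)
    (hν' : AnalyticOnNhd ℝ (powerSpectrum ν') Set.univ)
    (hsum : crossCorrelation μ μ + crossCorrelation ν ν =
      crossCorrelation μ' μ' + crossCorrelation ν' ν')
    (hcross : crossCorrelation μ ν = crossCorrelation μ' ν') :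
    (crossCorrelation μ μ = crossCorrelation μ' μ' ∧
        crossCorrelation ν ν = crossCorrelation ν' ν') ∨
      (crossCorrelation μ μ = crossCorrelation ν' ν' ∧
        crossCorrelation ν ν = crossCorrelation μ' μ') := by
  have hadd : powerSpectrum μ + powerSpectrum ν = powerSpectrum μ' + powerSpectrum ν' := by
    ext t
    have h := congrArg (charFun · t) hsum
    simp only [charFun_add_measure, charFun_crossCorrelation_self] at h
    exact_mod_cast h
  have hmul : powerSpectrum μ * powerSpectrum ν = powerSpectrum μ' * powerSpectrum ν' := by
    ext t
    have h := congrArg (fun ρ ↦ Complex.normSq (charFun ρ t)) hcross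
    simpa only [charFun_crossCorrelation, map_mul, Complex.normSq_conj] using! h
  simpa only [crossCorrelation_self_eq_iff] using
    eq_and_eq_or_eq_and_eq_of_add_eq_add_of_mul_eq_mul hμ hμ' hν' hadd hmul

end CrossCorrelation

section Restrict

theorem neg_restrict {G : Type*} [InvolutiveNeg G] [MeasurableSpace G] [MeasurableNeg G]
    (μ : Measure G) (L : Set G) : (μ.restrict L).neg = μ.neg.restrict (-L) := by
  conv_lhs => rw [← neg_neg L]
  exact ((MeasurableEquiv.neg G).restrict_map μ (-L)).symm

theorem crossCorrelation_restrict {G : Type*} [AddCommGroup G] [MeasurableSpace G]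
    [MeasurableAdd₂ G] [MeasurableNeg G] (μ : Measure G) [SFinite μ] [μ.IsAddLeftInvariant]
    [μ.IsNegInvariant] {K L : Set G} (hK : MeasurableSet K) (hL : MeasurableSet L) :
    crossCorrelation (μ.restrict K) (μ.restrict L) =
      μ.withDensity fun x ↦ μ (K ∩ (x + ·) '' L) := by
  rw [crossCorrelation, neg_restrict, Measure.neg_eq_self, ← withDensity_indicator_one hK,
    ← withDensity_indicator_one hL.neg, conv_withDensity_eq_lconvolution
      (measurable_one.indicator hK) (measurable_one.indicator hL.neg)]
  congr 1 with x
  have hmeas : MeasurableSet (K ∩ (x + ·) '' L) := by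
    rw [Set.image_add_left]
    exact hK.inter (measurable_const_add _ hL)
  rw [lconvolution_def, ← lintegral_indicator_one hmeas]
  congr 1 with y
  have hiff : -y + x ∈ -L ↔ -x + y ∈ L := by rw [Set.mem_neg, neg_add_rev, neg_neg]
  rw [Set.inter_indicator_one, Set.image_add_left, Pi.mul_apply]
  classical
  simp only [Set.indicator_apply, Set.mem_preimage, hiff, Pi.one_apply]

theorem continuous_measureReal_inter_image_add {G : Type*} [AddGroup G] [TopologicalSpace G]
    [IsTopologicalAddGroup G] [MeasurableSpace G] [BorelSpace G] (μ : Measure G)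
    [μ.IsAddLeftInvariant] [μ.InnerRegularCompactLTTop] [IsLocallyFiniteMeasure μ] {K L : Set G}
    (hK : MeasurableSet K) (hL : MeasurableSet L) (hLfin : μ L ≠ ⊤) :
    Continuous fun x ↦ μ.real (K ∩ (x + ·) '' L) := by
  let translation : C(G, C(G, G)) := ContinuousMap.curry ⟨fun p ↦ -p.1 + p.2, by fun_prop⟩
  let shift (x : G) : Set G := translation x ⁻¹' L
  have hpres (x : G) : MeasurePreserving (translation x) μ μ := measurePreserving_add_left μ (-x)
  have hmeas (x : G) : MeasurableSet (shift x) := (hpres x).measurable hL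
  have hfin (x : G) : μ (shift x) ≠ ⊤ := by
    rwa [(hpres x).measure_preimage hL.nullMeasurableSet]
  have hinter (x : G) : μ (K ∩ shift x) ≠ ⊤ :=
    measure_ne_top_of_subset Set.inter_subset_right (hfin x)
  have hdist (x y : G) : |μ.real (K ∩ shift y) - μ.real (K ∩ shift x)| ≤
      μ.real (shift y ∆ shift x) :=
    calc |μ.real (K ∩ shift y) - μ.real (K ∩ shift x)|
      _ ≤ μ.real ((K ∩ shift y) ∆ (K ∩ shift x)) :=
        abs_measureReal_sub_le_measureReal_symmDiff' (hK.inter (hmeas y)).nullMeasurableSet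
          (hK.inter (hmeas x)).nullMeasurableSet (hinter y) (hinter x)
      _ = μ.real (K ∩ shift y ∆ shift x) := by rw [Set.inter_symmDiff_distrib_left]
      _ ≤ μ.real (shift y ∆ shift x) :=
        measureReal_mono Set.inter_subset_right (measure_symmDiff_ne_top (hfin y) (hfin x))
  have htendsto (x : G) : Filter.Tendsto (fun y ↦ μ (shift y ∆ shift x)) (𝓝 x) (𝓝 0) :=
    tendsto_measure_symmDiff_preimage_nhds_zero (translation.continuous.tendsto x)
      (.of_forall hpres) (hpres x) hL.nullMeasurableSet hLfin
  simp only [Set.image_add_left]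
  refine continuous_iff_continuousAt.2 fun x ↦ tendsto_iff_dist_tendsto_zero.2 ?_
  exact squeeze_zero (fun _ ↦ dist_nonneg) (hdist x) <|
    (ENNReal.tendsto_toReal_zero_iff fun y ↦ measure_symmDiff_ne_top (hfin y) (hfin x)).2
      (htendsto x)

theorem withDensity_ofReal_eq_iff {X : Type*} [TopologicalSpace X] [MeasurableSpace X]
    [OpensMeasurableSpace X] {μ : Measure X} [SigmaFinite μ] [μ.IsOpenPosMeasure] {f g : X → ℝ}
    (hf : Continuous f) (hg : Continuous g) (hf0 : 0 ≤ f) (hg0 : 0 ≤ g) :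
    μ.withDensity (fun x ↦ ENNReal.ofReal (f x)) = μ.withDensity (fun x ↦ ENNReal.ofReal (g x)) ↔
      f = g := by
  have hf' : Continuous fun x ↦ ENNReal.ofReal (f x) := ENNReal.continuous_ofReal.comp hf
  have hg' : Continuous fun x ↦ ENNReal.ofReal (g x) := ENNReal.continuous_ofReal.comp hg
  rw [withDensity_eq_iff_of_sigmaFinite hf'.measurable.aemeasurable hg'.measurable.aemeasurable,
    hf'.ae_eq_iff_eq μ hg']
  simp only [funext_iff, ENNReal.ofReal_eq_ofReal_iff (hf0 _) (hg0 _)]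

end Restrict

section Covariogram

variable {n : ℕ} {K L : Set (EuclideanSpace ℝ (Fin n))}

theorem covariogram_nonneg (K : Set (EuclideanSpace ℝ (Fin n))) : 0 ≤ covariogram K :=
  fun _ ↦ ENNReal.toReal_nonneg

theorem continuous_covariogram (hK : MeasurableSet K) (hKfin : volume K ≠ ⊤) :
    Continuous (covariogram K) :=
  continuous_measureReal_inter_image_add volume hK hK hKfin

theorem crossCorrelation_volume_restrict (hK : MeasurableSet K) (hL : MeasurableSet L)
    (hLfin : volume L ≠ ⊤) :
    crossCorrelation (volume.restrict K) (volume.restrict L) =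
      volume.withDensity fun x ↦ ENNReal.ofReal (crossCovariogram K L x) := by
  rw [crossCorrelation_restrict volume hK hL]
  congr 1 with x
  rw [crossCovariogram, ENNReal.ofReal_toReal]
  refine measure_ne_top_of_subset Set.inter_subset_right ?_
  rwa [Set.image_add_left, measure_preimage_add]

theorem crossCorrelation_volume_restrict_self (hK : MeasurableSet K) (hKfin : volume K ≠ ⊤) :
    crossCorrelation (volume.restrict K) (volume.restrict K) =
      volume.withDensity fun x ↦ ENNReal.ofReal (covariogram K x) :=
  crossCorrelation_volume_restrict hK hK hKfin

theorem crossCorrelation_volume_restrict_self_add (hK : MeasurableSet K) (hL : MeasurableSet L)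
    (hKfin : volume K ≠ ⊤) (hLfin : volume L ≠ ⊤) :
    crossCorrelation (volume.restrict K) (volume.restrict K) +
        crossCorrelation (volume.restrict L) (volume.restrict L) =
      volume.withDensity fun x ↦ ENNReal.ofReal (covariogram K x + covariogram L x) := by
  rw [crossCorrelation_volume_restrict_self hK hKfin,
    crossCorrelation_volume_restrict_self hL hLfin,
    ← withDensity_add_left (continuous_covariogram hK hKfin).measurable.ennreal_ofReal]
  congr 1 with x
  exact (ENNReal.ofReal_add (covariogram_nonneg K x) (covariogram_nonneg L x)).symm

theorem crossCorrelation_volume_restrict_self_eq_iff (hK : MeasurableSet K) (hL : MeasurableSet L)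
    (hKfin : volume K ≠ ⊤) (hLfin : volume L ≠ ⊤) :
    crossCorrelation (volume.restrict K) (volume.restrict K) =
        crossCorrelation (volume.restrict L) (volume.restrict L) ↔
      ∀ x, covariogram K x = covariogram L x := by
  rw [crossCorrelation_volume_restrict_self hK hKfin,
    crossCorrelation_volume_restrict_self hL hLfin,
    withDensity_ofReal_eq_iff (continuous_covariogram hK hKfin) (continuous_covariogram hL hLfin)
      (covariogram_nonneg K) (covariogram_nonneg L), funext_iff]

theorem covariogram_system_decouples_general {F G F' G' : Set (EuclideanSpace ℝ (Fin n))}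
    (hF : MeasurableSet F) (hFbdd : Bornology.IsBounded F)
    (hG : MeasurableSet G) (hGbdd : Bornology.IsBounded G)
    (hF' : MeasurableSet F') (hF'bdd : Bornology.IsBounded F')
    (hG' : MeasurableSet G') (hG'bdd : Bornology.IsBounded G')
    (hsum : ∀ x, covariogram F x + covariogram G x = covariogram F' x + covariogram G' x)
    (hcross : ∀ x, crossCovariogram F G x = crossCovariogram F' G' x) :
    ((∀ x, covariogram F x = covariogram F' x) ∧ (∀ x, covariogram G x = covariogram G' x)) ∨
    ((∀ x, covariogram F x = covariogram G' x) ∧ (∀ x, covariogram G x = covariogram F' x)) := by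
  have hFfin : volume F ≠ ⊤ := hFbdd.measure_lt_top.ne
  have hGfin : volume G ≠ ⊤ := hGbdd.measure_lt_top.ne
  have hF'fin : volume F' ≠ ⊤ := hF'bdd.measure_lt_top.ne
  have hG'fin : volume G' ≠ ⊤ := hG'bdd.measure_lt_top.ne
  have := isFiniteMeasure_restrict.2 hFfin
  have := isFiniteMeasure_restrict.2 hGfin
  have := isFiniteMeasure_restrict.2 hF'fin
  have := isFiniteMeasure_restrict.2 hG'fin
  rw [← crossCorrelation_volume_restrict_self_eq_iff hF hF' hFfin hF'fin,
    ← crossCorrelation_volume_restrict_self_eq_iff hG hG' hGfin hG'fin,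
    ← crossCorrelation_volume_restrict_self_eq_iff hF hG' hFfin hG'fin,
    ← crossCorrelation_volume_restrict_self_eq_iff hG hF' hGfin hF'fin]
  apply crossCorrelation_system_decouples (analyticOnNhd_powerSpectrum_restrict volume hFbdd)
    (analyticOnNhd_powerSpectrum_restrict volume hF'bdd)
    (analyticOnNhd_powerSpectrum_restrict volume hG'bdd)
  · rw [crossCorrelation_volume_restrict_self_add hF hG hFfin hGfin,
      crossCorrelation_volume_restrict_self_add hF' hG' hF'fin hG'fin]
    simp only [hsum]
  · rw [crossCorrelation_volume_restrict hF hG hGfin,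
      crossCorrelation_volume_restrict hF' hG' hG'fin]
    simp only [hcross]

end Covariogram

/-- If `g_F + g_G = g_{F'} + g_{G'}` and `g_{F,G} = g_{F',G'}` for convex bodies
`F, G, F', G'` with `int F ≠ ∅`, then either `g_F = g_{F'}` and `g_G = g_{G'}`, or
`g_F = g_{G'}` and `g_G = g_{F'}`. -/
theorem covariogram_system_decouples
    (n : ℕ) (F G F' G' : Set (EuclideanSpace ℝ (Fin n)))
    (hFconv : Convex ℝ F) (hFcomp : IsCompact F) (hFint : (interior F).Nonempty)
    (hGconv : Convex ℝ G) (hGcomp : IsCompact G) (hGne : G.Nonempty)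
    (hF'conv : Convex ℝ F') (hF'comp : IsCompact F') (hF'ne : F'.Nonempty)
    (hG'conv : Convex ℝ G') (hG'comp : IsCompact G') (hG'ne : G'.Nonempty)
    (hsum : ∀ x, covariogram F x + covariogram G x = covariogram F' x + covariogram G' x)
    (hcross : ∀ x, crossCovariogram F G x = crossCovariogram F' G' x) :
    ((∀ x, covariogram F x = covariogram F' x) ∧ (∀ x, covariogram G x = covariogram G' x)) ∨
    ((∀ x, covariogram F x = covariogram G' x) ∧ (∀ x, covariogram G x = covariogram F' x)) := by
  exact covariogram_system_decouples_general hFcomp.measurableSet hFcomp.isBounded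
    hGcomp.measurableSet hGcomp.isBounded hF'comp.measurableSet hF'comp.isBounded
    hG'comp.measurableSet hG'comp.isBounded hsum hcross
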